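/- For every signature σ of the complete graph K_n (n ≥ 2), the frustration number satisfies l_0(K_n, σ) ≤ n − 2, with equality for the all-negative signature: l_0(−K_n) = n − 2. Moreover, if (K_n, σ) is not antibalanced, then l_0(K_n, σ) < n − 2. -/

import Mathlib

/-- The sign of a walk in a signed graph: the product of the signs of its edges. -/
def walkSign {V : Type*} (G : SimpleGraph V) (σ : Sym2 V → ℤˣ) {u v : V}
    (w : G.Walk u v) : ℤˣ :=
  (w.edges.map σ).prod

/-- A signed graph is balanced if every circle (cycle) is positive. -/
def sgBalanced {V : Type*} (G : SimpleGraph V) (σ : Sym2 V → ℤˣ) : Prop :=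
  ∀ ⦃v : V⦄ (w : G.Walk v v), w.IsCycle → walkSign G σ w = 1

/-- A signed graph is antibalanced if its negative (negating every sign) is balanced. -/
def sgAntibalanced {V : Type*} (G : SimpleGraph V) (σ : Sym2 V → ℤˣ) : Prop :=
  sgBalanced G (fun e => -σ e)

/-- The frustration number `l₀(Σ)`: the minimum number of vertices whose deletion leaves
a balanced signed graph (equivalently, a minimum set of vertices meeting every negative
circle). -/
noncomputable def frustNum {V : Type*} (G : SimpleGraph V) (σ : Sym2 V → ℤˣ) : ℕ :=
  sInf {k | ∃ X : Finset V, X.card = k ∧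
    ∀ ⦃a : V⦄ (w : G.Walk a a), w.IsCycle → (∀ x ∈ w.support, x ∉ X) →
      walkSign G σ w = 1}

/-!
A function `f : V → {±1}` with `σ(uv) = f(u) f(v)` makes the sign of a walk telescope to the product
of the values of `f` at its ends, so every circle is positive. If all triangles of `S` through a
fixed vertex `a` are positive, then the signs of the edges at `a` give such an `f` on `S`, and
deleting the vertices outside `S` leaves a balanced graph. Pairs of vertices contain no triangle,
whence `l₀ ≤ n - 2`; one positive triangle gives `l₀ ≤ n - 3`; and if no triangle is positive, then
`-σ` is balanced. Conversely, in an antibalanced graph every triangle is negative, so at most two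
vertices of a clique can survive in a balanced deletion.
-/

section

variable {V : Type*} {G : SimpleGraph V} {σ : Sym2 V → ℤˣ}

@[simp]
lemma walkSign_nil {u : V} : walkSign G σ (.nil : G.Walk u u) = 1 := by
  simp [walkSign]

@[simp]
lemma walkSign_cons {u v w : V} (h : G.Adj u v) (p : G.Walk v w) :
    walkSign G σ (.cons h p) = σ s(u, v) * walkSign G σ p := by
  simp [walkSign]

lemma sgAntibalanced_neg_one : sgAntibalanced G (fun _ => -1) := by
  intro v w _
  simp [walkSign]

/-- A potential for the signed graph on the vertex set `S`: a vertex labelling by signs that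
induces the sign of every edge inside `S`. Equivalently, switching by `f` makes these edges
positive. -/
def IsPotentialOn (G : SimpleGraph V) (σ : Sym2 V → ℤˣ) (S : Set V) (f : V → ℤˣ) : Prop :=
  ∀ ⦃u⦄, u ∈ S → ∀ ⦃v⦄, v ∈ S → G.Adj u v → σ s(u, v) = f u * f v

namespace IsPotentialOn

variable {f : V → ℤˣ}

lemma walkSign_eq_mul {S : Set V} (hf : IsPotentialOn G σ S f) {u v : V} (w : G.Walk u v)
    (hw : ∀ x ∈ w.support, x ∈ S) : walkSign G σ w = f u * f v := by
  induction w with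
  | nil => rw [walkSign_nil, Int.units_mul_self]
  | @cons u v t h p ih =>
    simp only [SimpleGraph.Walk.support_cons, List.forall_mem_cons] at hw
    calc walkSign G σ (.cons h p)
        = (f u * f v) * (f v * f t) := by
          rw [walkSign_cons, hf hw.1 (hw.2 v p.start_mem_support) h, ih hw.2]
      _ = f u * f t := by rw [mul_assoc, ← mul_assoc (f v), Int.units_mul_self, one_mul]

lemma walkSign_eq_one {S : Set V} (hf : IsPotentialOn G σ S f) {v : V} (w : G.Walk v v)
    (hw : ∀ x ∈ w.support, x ∈ S) : walkSign G σ w = 1 := by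
  rw [hf.walkSign_eq_mul w hw, Int.units_mul_self]

lemma frustNum_add_card_le [Fintype V] {S : Finset V} (hf : IsPotentialOn G σ S f) :
    frustNum G σ + S.card ≤ Fintype.card V := by
  classical
  have hle : frustNum G σ ≤ Sᶜ.card :=
    Nat.sInf_le ⟨Sᶜ, rfl, fun _ w _ hw => hf.walkSign_eq_one w (by simpa using hw)⟩
  calc frustNum G σ + S.card ≤ Sᶜ.card + S.card := by gcongr
    _ = Fintype.card V := S.card_compl_add_card

end IsPotentialOn

/-- The sign of the triangle on the vertices `a`, `b`, `c`. It is a function of the signature alone,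
so that it makes sense before the edges of the triangle are known to lie in a given graph. -/
def triangleSign (σ : Sym2 V → ℤˣ) (a b c : V) : ℤˣ :=
  σ s(a, b) * σ s(b, c) * σ s(c, a)

lemma triangleSign_neg (a b c : V) :
    triangleSign (fun e => -σ e) a b c = -triangleSign σ a b c := by
  simp [triangleSign]

lemma triangleSign_eq_one_iff {a b c : V} :
    triangleSign σ a b c = 1 ↔ σ s(b, c) = σ s(a, b) * σ s(a, c) := by
  rw [triangleSign, Sym2.eq_swap (a := c), mul_right_comm, mul_eq_one_iff_inv_eq',
    Int.units_inv_eq_self, eq_comm]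

lemma triangleSign_swap_right (a b c : V) : triangleSign σ a c b = triangleSign σ a b c := by
  rw [triangleSign, triangleSign, Sym2.eq_swap (a := a) (b := c), Sym2.eq_swap (a := c) (b := b),
    Sym2.eq_swap (a := b) (b := a), mul_comm (σ s(c, a)), mul_comm, mul_assoc]

lemma exists_isCycle_walkSign_eq_triangleSign {a b c : V} (hab : G.Adj a b) (hbc : G.Adj b c)
    (hca : G.Adj c a) : ∃ w : G.Walk a a, w.IsCycle ∧ w.support = [a, b, c, a] ∧
      ∀ σ : Sym2 V → ℤˣ, walkSign G σ w = triangleSign σ a b c := by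
  refine ⟨.cons hab (.cons hbc (.cons hca .nil)), ?_, rfl, fun σ => ?_⟩
  · simp [SimpleGraph.Walk.cons_isCycle_iff, hab.ne, hab.ne', hbc.ne, hca.ne, hca.ne']
  · simp [triangleSign, mul_assoc]

lemma exists_isPotentialOn_of_triangleSign_eq_one {S : Set V} {a : V}
    (h : ∀ u ∈ S, ∀ v ∈ S, a ≠ u → a ≠ v → u ≠ v → triangleSign σ a u v = 1) :
    ∃ f, IsPotentialOn G σ S f := by
  classical
  refine ⟨Function.update (fun v => σ s(a, v)) a 1, fun u hu v hv huv => ?_⟩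
  rcases eq_or_ne a u with rfl | hau
  · simp [huv.ne']
  rcases eq_or_ne a v with rfl | hav
  · simp [hau.symm, Sym2.eq_swap]
  simpa [hau.symm, hav.symm] using triangleSign_eq_one_iff.1 (h u hu v hv hau hav huv.ne)

lemma exists_triangleSign_eq_one_of_not_sgAntibalanced (h : ¬ sgAntibalanced G σ) :
    ∃ a b c, a ≠ b ∧ a ≠ c ∧ b ≠ c ∧ triangleSign σ a b c = 1 := by
  contrapose! h
  intro a w _
  obtain ⟨f, hf⟩ : ∃ f, IsPotentialOn G (fun e => -σ e) Set.univ f :=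
    exists_isPotentialOn_of_triangleSign_eq_one (a := a) fun u _ v _ hau hav huv => by
      rw [triangleSign_neg, Int.units_ne_iff_eq_neg.1 (h a u v hau hav huv), neg_neg]
  exact hf.walkSign_eq_one w fun _ _ => Set.mem_univ _

lemma frustNum_add_two_le [Fintype V] (hV : 2 ≤ Fintype.card V) :
    frustNum G σ + 2 ≤ Fintype.card V := by
  classical
  obtain ⟨a, b, hab⟩ := Fintype.one_lt_card_iff.1 hV
  obtain ⟨f, hf⟩ : ∃ f, IsPotentialOn G σ ({a, b} : Finset V) f :=
    exists_isPotentialOn_of_triangleSign_eq_one (a := a) fun u hu v hv hau hav huv => by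
      simp only [Finset.mem_coe, Finset.mem_insert, Finset.mem_singleton] at hu hv
      grind
  simpa [Finset.card_pair hab] using hf.frustNum_add_card_le

lemma frustNum_add_three_le [Fintype V] {a b c : V} (hab : a ≠ b) (hac : a ≠ c) (hbc : b ≠ c)
    (h : triangleSign σ a b c = 1) : frustNum G σ + 3 ≤ Fintype.card V := by
  classical
  obtain ⟨f, hf⟩ : ∃ f, IsPotentialOn G σ ({a, b, c} : Finset V) f :=
    exists_isPotentialOn_of_triangleSign_eq_one (a := a) fun u hu v hv hau hav huv => by
      simp only [Finset.mem_coe, Finset.mem_insert, Finset.mem_singleton] at hu hv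
      obtain ⟨rfl, rfl⟩ | ⟨rfl, rfl⟩ : u = b ∧ v = c ∨ u = c ∧ v = b := by grind
      · exact h
      · rwa [triangleSign_swap_right]
  have hcard : ({a, b, c} : Finset V).card = 3 :=
    Finset.card_eq_three.2 ⟨a, b, c, hab, hac, hbc, rfl⟩
  exact hcard ▸ hf.frustNum_add_card_le

variable (G σ) in
lemma exists_card_eq_frustNum [Finite V] : ∃ X : Finset V, X.card = frustNum G σ ∧
    ∀ ⦃a : V⦄ (w : G.Walk a a), w.IsCycle → (∀ x ∈ w.support, x ∉ X) → walkSign G σ w = 1 := by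
  have := Fintype.ofFinite V
  exact Nat.sInf_mem (s := {k | ∃ X : Finset V, X.card = k ∧ _})
    ⟨_, Finset.univ, rfl, fun a w _ hw =>
      absurd (Finset.mem_univ a) (hw a w.start_mem_support)⟩

lemma sgAntibalanced.card_le_of_isClique [Finite V] (hσ : sgAntibalanced G σ) {S : Finset V}
    (hS : G.IsClique S) : S.card ≤ frustNum G σ + 2 := by
  classical
  obtain ⟨X, hX, hbal⟩ := exists_card_eq_frustNum G σ
  suffices hcard : (S \ X).card ≤ 2 by
    have := Finset.card_le_card_sdiff_add_card (s := S) (t := X)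
    omega
  by_contra! hcard
  obtain ⟨a, b, c, ha, hb, hc, hab, hac, hbc⟩ := Finset.two_lt_card_iff.1 hcard
  rw [Finset.mem_sdiff] at ha hb hc
  obtain ⟨w, hw, hsupp, hsign⟩ := exists_isCycle_walkSign_eq_triangleSign
    (hS ha.1 hb.1 hab) (hS hb.1 hc.1 hbc) (hS hc.1 ha.1 hac.symm)
  have hpos : triangleSign σ a b c = 1 :=
    hsign σ ▸ hbal w hw (by simp [hsupp, ha.2, hb.2, hc.2])
  have hneg : -triangleSign σ a b c = 1 := by
    rw [← triangleSign_neg, ← hsign]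
    exact hσ w hw
  rw [hpos] at hneg
  exact absurd hneg (by decide)

theorem frustNum_complete_general [Fintype V] (hV : 2 ≤ Fintype.card V) (G : SimpleGraph V)
    (σ : Sym2 V → ℤˣ) :
    frustNum G σ + 2 ≤ Fintype.card V ∧
    (sgAntibalanced (⊤ : SimpleGraph V) σ →
      frustNum (⊤ : SimpleGraph V) σ + 2 = Fintype.card V) ∧
    (¬ sgAntibalanced G σ → frustNum G σ + 2 < Fintype.card V) := by
  refine ⟨frustNum_add_two_le hV, fun hσ => (frustNum_add_two_le hV).antisymm ?_, fun hσ => ?_⟩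
  · exact hσ.card_le_of_isClique (S := Finset.univ) fun _ _ _ _ huv => huv
  · obtain ⟨a, b, c, hab, hac, hbc, habc⟩ := exists_triangleSign_eq_one_of_not_sgAntibalanced hσ
    exact frustNum_add_three_le hab hac hbc habc

end

/-- For every signature `σ` of `K_n` (`n ≥ 2`), the frustration number satisfies
`l₀(K_n, σ) ≤ n - 2`, with equality for the all-negative signature; moreover if
`(K_n, σ)` is not antibalanced then `l₀(K_n, σ) < n - 2`. -/
theorem frustNum_complete (n : ℕ) (hn : 2 ≤ n) (σ : Sym2 (Fin n) → ℤˣ) :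
    frustNum (⊤ : SimpleGraph (Fin n)) σ ≤ n - 2 ∧
    frustNum (⊤ : SimpleGraph (Fin n)) (fun _ => -1) = n - 2 ∧
    (¬ sgAntibalanced (⊤ : SimpleGraph (Fin n)) σ →
      frustNum (⊤ : SimpleGraph (Fin n)) σ < n - 2) := by
  have general := frustNum_complete_general (V := Fin n) (by simpa) ⊤
  simp only [Fintype.card_fin] at general
  exact ⟨Nat.le_sub_of_add_le (general σ).1,
    Nat.eq_sub_of_add_eq ((general _).2.1 sgAntibalanced_neg_one),
    fun h => Nat.lt_sub_of_add_lt ((general σ).2.2 h)⟩
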